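/- For 0 < b < 1, the principal-value identity (2s²/π) · PV ∫₀^∞ (s')^{−b} / ((s')² − s²) · ds'/s' · s' — i.e. (2s/π) PV ∫₀^∞ [1/((s')² − s²)] · a (s')^{−b} ds' — equals −a tan(πb/2) s^{−b} for every s > 0 and a ∈ ℝ: the singly-subtracted integral dispersion relation applied to the Regge power law Im F₊(s)/s = a s^{−b} yields Re F₊(s)/s = −a tan(πb/2) s^{−b} (with zero subtraction constant and lower limit 0). -/

import Mathlib

lemma tan_hasSum (b : ℝ) (hb0 : 0 < b) (hb1 : b < 1) :
    HasSum (fun k : ℕ => 1 / (2 * (k:ℝ) - b + 1) - 1 / (2 * (k:ℝ) + b + 1))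
      (Real.pi / 2 * Real.tan (Real.pi * b / 2)) := by
  have mem : ∀ x : ℝ, 0 < x → x < 1 → (x : ℂ) ∈ Complex.integerComplement := by
    intro x h0 h1
    rw [Complex.integerComplement, Set.mem_compl_iff]
    rintro ⟨n, hn⟩
    have h : (n : ℝ) = x := by exact_mod_cast hn
    have h2 : (0 : ℤ) < n := by exact_mod_cast (h ▸ h0 : (0:ℝ) < n)
    have h3 : n < (1 : ℤ) := by exact_mod_cast (h ▸ h1 : (n:ℝ) < 1)
    omega
  have m1 := mem b hb0 hb1
  have m2 := mem (b/2) (by linarith) (by linarith)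
  have H : ∀ x : ℂ, x ∈ Complex.integerComplement →
      HasSum (fun n : ℕ => 1 / (x - (n+1)) + 1 / (x + (n+1)))
        (Real.pi * Complex.cot (Real.pi * x) - 1 / x) := by
    intro x hx
    rw [cot_series_rep' hx]
    exact (summable_cotTerm hx).hasSum
  have h1 := H _ m1
  have h2 := (H _ m2).mul_left (1/2)
  have h2' : HasSum (fun k : ℕ => 1 / ((b:ℂ) - (((2 * k + 1 : ℕ):ℂ)+1)) + 1 / ((b:ℂ) + (((2 * k + 1 : ℕ):ℂ)+1)))
      (1/2 * (Real.pi * Complex.cot (Real.pi * ((b/2 : ℝ) : ℂ)) - 1 / ((b/2 : ℝ) : ℂ))) := by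
    convert! h2 using 1
    ext k
    push_cast
    have e1 : (b:ℂ) - (2 * k + 1 + 1) = 2 * ((b:ℂ) / 2 - (k + 1)) := by ring
    have e2 : (b:ℂ) + (2 * k + 1 + 1) = 2 * ((b:ℂ) / 2 + (k + 1)) := by ring
    rw [e1, e2, one_div_mul_eq_div, div_eq_mul_inv, one_div, one_div, mul_inv, mul_inv]
    ring
  have hs : Summable (fun k : ℕ => 1 / ((b:ℂ) - (((2 * k : ℕ):ℂ)+1)) + 1 / ((b:ℂ) + (((2 * k : ℕ):ℂ)+1))) :=
    h1.summable.comp_injective (i := fun k : ℕ => 2 * k) (fun x y h => by simpa using h)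
  have h3 := (hs.hasSum.even_add_odd (f := fun n : ℕ => 1 / ((b:ℂ) - ((n:ℂ)+1)) + 1 / ((b:ℂ) + ((n:ℂ)+1))) h2').unique h1
  have h4 := hs.hasSum
  rw [eq_sub_of_add_eq h3] at h4
  rw [← Complex.hasSum_ofReal]
  convert! h4.neg using 1
  · ext k
    push_cast
    have e1 : (2 * (k:ℂ) - b + 1) = -((b:ℂ) - (2*k+1)) := by ring
    have e2 : (2 * (k:ℂ) + b + 1) = ((b:ℂ) + (2*k+1)) := by ring
    rw [e1, e2, one_div_neg_eq_neg_one_div]; ring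
  · have hsin : Real.sin (Real.pi * b / 2) ≠ 0 :=
      (Real.sin_pos_of_pos_of_lt_pi (by positivity) (by nlinarith [Real.pi_pos])).ne'
    have hcos : Real.cos (Real.pi * b / 2) ≠ 0 :=
      (Real.cos_pos_of_mem_Ioo ⟨by nlinarith [Real.pi_pos], by nlinarith [Real.pi_pos]⟩).ne'
    have e1 : (Real.pi * (b:ℂ)) = 2 * ((Real.pi * b / 2 : ℝ) : ℂ) := by push_cast; ring
    have e2 : (Real.pi * ((b/2 : ℝ):ℂ)) = ((Real.pi * b / 2 : ℝ) : ℂ) := by push_cast; ring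
    rw [e1, e2, Complex.cot_eq_cos_div_sin, Complex.cot_eq_cos_div_sin, Complex.cos_two_mul, Complex.sin_two_mul, Complex.ofReal_mul, Complex.ofReal_tan, Complex.tan_eq_sin_div_cos]
    rw [← Complex.ofReal_sin, ← Complex.ofReal_cos]
    have hsc := Real.sin_sq_add_cos_sq (Real.pi * b / 2)
    generalize Real.sin (Real.pi * b / 2) = S at *
    generalize Real.cos (Real.pi * b / 2) = C at *
    have hscC : (S:ℂ) ^ 2 + (C:ℂ) ^ 2 = 1 := by exact_mod_cast hsc
    have hS : (S:ℂ) ≠ 0 := by exact_mod_cast hsin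
    have hC : (C:ℂ) ≠ 0 := by exact_mod_cast hcos
    have hB : (b:ℂ) ≠ 0 := by exact_mod_cast hb0.ne'
    push_cast
    field_simp
    ring_nf
    linear_combination ((Real.pi:ℂ) * b) * hscC

noncomputable def gg (b y : ℝ) : ℝ := (y ^ (-b) - y ^ b) / (1 - y ^ 2)

lemma gg_bound (b y : ℝ) (hb0 : 0 < b) (hb1 : b < 1) (h0 : 0 < y) (h1 : y < 1) :
    ‖gg b y‖ ≤ y ^ (-b) := by
  have hd : 0 < 1 - y ^ 2 := by nlinarith
  have e1 : y ^ (-b) * (y ^ 2) = y ^ (2 - b) := by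
    rw [← Real.rpow_natCast, ← Real.rpow_add h0]; congr 1; push_cast; ring
  have e2 : y ^ (2 - b) ≤ y ^ b := Real.rpow_le_rpow_of_exponent_ge h0 h1.le (by linarith)
  have e3 : y ^ b ≤ y ^ (-b) := Real.rpow_le_rpow_of_exponent_ge h0 h1.le (by linarith)
  rw [gg, Real.norm_of_nonneg (div_nonneg (by linarith) hd.le), div_le_iff₀ hd]
  nlinarith

lemma gg_int (b : ℝ) (hb0 : 0 < b) (hb1 : b < 1) :
    IntervalIntegrable (gg b) MeasureTheory.volume 0 1 := by
  rw [intervalIntegrable_iff_integrableOn_Ioo_of_le zero_le_one]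
  have h := (intervalIntegral.intervalIntegrable_rpow' (a := 0) (b := 1) (r := -b) (by linarith))
  rw [intervalIntegrable_iff_integrableOn_Ioo_of_le zero_le_one] at h
  refine h.mono' ?_ ?_
  · exact (by unfold gg; fun_prop : Measurable (gg b)).aestronglyMeasurable
  · filter_upwards [MeasureTheory.ae_restrict_mem measurableSet_Ioo] with y hy
    exact gg_bound b y hb0 hb1 hy.1 hy.2

lemma gg_integral (b : ℝ) (hb0 : 0 < b) (hb1 : b < 1) :
    ∫ y in (0:ℝ)..1, gg b y = Real.pi / 2 * Real.tan (Real.pi * b / 2) := by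
  have hI : ∀ k : ℕ, ∀ r : ℝ, -1 < r → IntervalIntegrable (fun y : ℝ => y ^ (2 * (k:ℝ) + r)) MeasureTheory.volume 0 1 := by
    intro k r hr
    exact intervalIntegral.intervalIntegrable_rpow' (by have := k.cast_nonneg (α := ℝ); linarith)
  have hV : ∀ k : ℕ, ∀ r : ℝ, -1 < r → ∫ y in (0:ℝ)..1, y ^ (2 * (k:ℝ) + r) = 1 / (2 * (k:ℝ) + r + 1) := by
    intro k r hr
    have hk := k.cast_nonneg (α := ℝ)
    rw [integral_rpow (Or.inl (by linarith)), Real.one_rpow, Real.zero_rpow (by linarith), sub_zero]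
  have hD : ∀ k : ℕ, ∫ y in Set.Ioo (0:ℝ) 1, (y ^ (2 * (k:ℝ) + -b) - y ^ (2 * (k:ℝ) + b)) = 1 / (2 * (k:ℝ) - b + 1) - 1 / (2 * (k:ℝ) + b + 1) := by
    intro k
    rw [← MeasureTheory.integral_Ioc_eq_integral_Ioo, ← intervalIntegral.integral_of_le zero_le_one,
      intervalIntegral.integral_sub (hI k _ (by linarith)) (hI k _ (by linarith)), hV k _ (by linarith), hV k _ (by linarith)]
    ring
  have hN : ∀ k : ℕ, ∫ y in Set.Ioo (0:ℝ) 1, ‖(y ^ (2 * (k:ℝ) + -b) - y ^ (2 * (k:ℝ) + b))‖ = 1 / (2 * (k:ℝ) - b + 1) - 1 / (2 * (k:ℝ) + b + 1) := by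
    intro k
    rw [← hD k]
    refine MeasureTheory.setIntegral_congr_fun measurableSet_Ioo fun y hy => ?_
    refine Real.norm_of_nonneg (sub_nonneg.2 ?_)
    exact Real.rpow_le_rpow_of_exponent_ge hy.1 hy.2.le (by linarith)
  have ts := tan_hasSum b hb0 hb1
  have key := MeasureTheory.hasSum_integral_of_summable_integral_norm
    (μ := MeasureTheory.volume.restrict (Set.Ioo (0:ℝ) 1))
    (F := fun (k : ℕ) (y : ℝ) => y ^ (2 * (k:ℝ) + -b) - y ^ (2 * (k:ℝ) + b))
    (fun k => by
      have := (hI k (-b) (by linarith)).sub (hI k b (by linarith))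
      rwa [intervalIntegrable_iff_integrableOn_Ioo_of_le zero_le_one] at this)
    (by simpa only [hN] using ts.summable)
  simp only [hD] at key
  rw [← key.unique ts, intervalIntegral.integral_of_le zero_le_one, MeasureTheory.integral_Ioc_eq_integral_Ioo]
  refine MeasureTheory.setIntegral_congr_fun measurableSet_Ioo fun y hy => ?_
  have hg := (hasSum_geometric_of_lt_one (r := y ^ 2) (by positivity) (by nlinarith [hy.1, hy.2])).mul_left (y ^ (-b) - y ^ b)
  have : gg b y = (y ^ (-b) - y ^ b) * (1 - y ^ 2)⁻¹ := rfl
  rw [this, ← hg.tsum_eq]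
  refine tsum_congr fun k => ?_
  rw [Real.rpow_add hy.1, Real.rpow_add hy.1, ← pow_mul]
  have : y ^ (2 * (k:ℝ)) = y ^ (2 * k) := by rw [← Real.rpow_natCast]; push_cast; rfl
  rw [this]; ring

lemma sub1 (s a b ε : ℝ) (hs : 0 < s) :
    ∫ x in Set.Ioo (0:ℝ) (s - ε), a * x ^ (-b) / (x ^ 2 - s ^ 2) =
      a * s ^ (-b) / s * ∫ y in Set.Ioo (0:ℝ) (1 - ε / s), -(y ^ (-b) / (1 - y ^ 2)) := by
  have him : (fun y => s * y) '' Set.Ioo (0:ℝ) (1 - ε / s) = Set.Ioo (0:ℝ) (s - ε) := by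
    rw [Set.image_mul_left_Ioo hs]; congr 1
    · simp
    · field_simp
  rw [← him, MeasureTheory.integral_image_eq_integral_abs_deriv_smul (f' := fun _ => s) measurableSet_Ioo
    (fun x _ => by simpa using ((hasDerivAt_id x).const_mul s).hasDerivWithinAt)
    (fun x _ y _ h => by simpa [hs.ne'] using h), ← MeasureTheory.integral_const_mul]
  refine MeasureTheory.setIntegral_congr_fun measurableSet_Ioo fun y hy => ?_
  simp only [smul_eq_mul]
  rw [abs_of_pos hs, Real.mul_rpow hs.le hy.1.le]
  have : (s * y) ^ 2 - s ^ 2 = -(s ^ 2 * (1 - y ^ 2)) := by ring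
  rw [this, div_neg]
  by_cases h : 1 - y ^ 2 = 0
  · simp [h]
  · field_simp

lemma sub2 (s a b ε : ℝ) (hs : 0 < s) (hε : 0 < ε) :
    ∫ x in Set.Ioi (s + ε), a * x ^ (-b) / (x ^ 2 - s ^ 2) =
      a * s ^ (-b) / s * ∫ y in Set.Ioo (0:ℝ) (1 / (1 + ε / s)), y ^ b / (1 - y ^ 2) := by
  have him : (fun y => s / y) '' Set.Ioo (0:ℝ) (1 / (1 + ε / s)) = Set.Ioi (s + ε) := by
    have e : 1 / (1 + ε / s) = s / (s + ε) := by field_simp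
    rw [e]
    ext x
    simp only [Set.mem_image, Set.mem_Ioo, Set.mem_Ioi]
    constructor
    · rintro ⟨y, ⟨h0, h1⟩, rfl⟩
      rw [lt_div_iff₀ (by positivity)] at h1
      rw [lt_div_iff₀ h0]; linarith
    · intro h
      have hx : 0 < x := by linarith
      refine ⟨s / x, ⟨by positivity, ?_⟩, by field_simp⟩
      exact div_lt_div_of_pos_left hs (by positivity) h
  rw [← him, MeasureTheory.integral_image_eq_integral_abs_deriv_smul (f' := fun y => -(s / y ^ 2)) measurableSet_Ioo
    (fun x hx => by
      have := ((hasDerivAt_inv hx.1.ne').const_mul s).hasDerivWithinAt (s := Set.Ioo (0:ℝ) (1 / (1 + ε / s)))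
      convert! this using 1; ring)
    (fun x hx y hy h => by
      have h1 := hx.1.ne'
      have h2 := hy.1.ne'
      have h' : s / x = s / y := h
      field_simp at h'
      exact h'.symm), ← MeasureTheory.integral_const_mul]
  refine MeasureTheory.setIntegral_congr_fun measurableSet_Ioo fun y hy => ?_
  simp only [smul_eq_mul]
  have h0 := hy.1
  rw [abs_neg, abs_of_pos (by positivity), Real.div_rpow hs.le hy.1.le, Real.rpow_neg h0.le]
  have : (s / y) ^ 2 - s ^ 2 = (s ^ 2 * (1 - y ^ 2)) / y ^ 2 := by field_simp
  rw [this]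
  have : 0 < y ^ b := Real.rpow_pos_of_pos h0 b
  by_cases h : 1 - y ^ 2 = 0
  · simp [h]
  · field_simp

lemma powInt (b c d : ℝ) (hb0 : 0 < b) (hc : 0 ≤ c) (hcd : c ≤ d) (hd : d < 1) :
    IntervalIntegrable (fun y : ℝ => y ^ b / (1 - y ^ 2)) MeasureTheory.volume c d := by
  apply ContinuousOn.intervalIntegrable
  rw [Set.uIcc_of_le hcd]
  refine ContinuousOn.div ?_ (by fun_prop) ?_
  · exact (Real.continuous_rpow_const hb0.le).continuousOn
  · intro y hy
    have := hy.1; have := hy.2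
    nlinarith

lemma comb (b δ : ℝ) (hb0 : 0 < b) (hb1 : b < 1) (h0 : 0 < δ) (h1 : δ < 1) :
    (∫ y in Set.Ioo (0:ℝ) (1 - δ), -(y ^ (-b) / (1 - y ^ 2))) +
      (∫ y in Set.Ioo (0:ℝ) (1 / (1 + δ)), y ^ b / (1 - y ^ 2)) =
    -(∫ y in (0:ℝ)..(1 - δ), gg b y) + ∫ y in (1 - δ)..(1 / (1 + δ)), y ^ b / (1 - y ^ 2) := by
  have hp : 0 < 1 / (1 + δ) := by positivity
  have hle : 1 - δ ≤ 1 / (1 + δ) := by rw [le_div_iff₀ (by linarith)]; nlinarith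
  have hlt : 1 / (1 + δ) < 1 := by rw [div_lt_iff₀ (by linarith)]; linarith
  rw [← MeasureTheory.integral_Ioc_eq_integral_Ioo, ← MeasureTheory.integral_Ioc_eq_integral_Ioo, ← intervalIntegral.integral_of_le hp.le, ← intervalIntegral.integral_of_le (by linarith)]
  have i1 := powInt b 0 (1 - δ) hb0 le_rfl (by linarith) (by linarith)
  have i2 := powInt b (1 - δ) (1 / (1 + δ)) hb0 (by linarith) hle hlt
  have i3 : IntervalIntegrable (gg b) MeasureTheory.volume 0 (1 - δ) :=
    (gg_int b hb0 hb1).mono_set (by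
      rw [Set.uIcc_of_le (by linarith), Set.uIcc_of_le zero_le_one]
      exact Set.Icc_subset_Icc le_rfl (by linarith))
  rw [← intervalIntegral.integral_add_adjacent_intervals i1 i2, ← add_assoc]
  congr 1
  have : (fun y : ℝ => -(y ^ (-b) / (1 - y ^ 2))) = fun y => -(gg b y) - y ^ b / (1 - y ^ 2) := by
    ext y; unfold gg; ring
  rw [this, intervalIntegral.integral_sub (f := fun y => -gg b y) i3.neg i1, intervalIntegral.integral_neg]
  ring

lemma small (b δ : ℝ) (hb0 : 0 < b) (h0 : 0 < δ) (h1 : δ < 1) :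
    ‖∫ y in (1 - δ)..(1 / (1 + δ)), y ^ b / (1 - y ^ 2)‖ ≤ δ := by
  have hle : 1 - δ ≤ 1 / (1 + δ) := by rw [le_div_iff₀ (by linarith)]; nlinarith
  have hlt : 1 / (1 + δ) < 1 := by rw [div_lt_iff₀ (by linarith)]; linarith
  have := intervalIntegral.norm_integral_le_of_norm_le_const (a := 1 - δ) (b := 1 / (1 + δ))
    (f := fun y : ℝ => y ^ b / (1 - y ^ 2)) (C := (1 + δ) / δ) (by
      intro y hy
      rw [Set.uIoc_of_le hle] at hy
      have hy0 : 0 < y := by linarith [hy.1]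
      have hy1 : y < 1 := by linarith [hy.2]
      have hd : 0 < 1 - y ^ 2 := by nlinarith
      have hp : y ^ b ≤ 1 := Real.rpow_le_one hy0.le hy1.le hb0.le
      rw [Real.norm_of_nonneg (by positivity)]
      have e : (1 + δ) / δ = 1 / (1 - 1 / (1 + δ)) := by
        have : 1 - 1 / (1 + δ) = δ / (1 + δ) := by field_simp; ring
        rw [this]; field_simp
      rw [e]
      exact div_le_div₀ zero_le_one hp (by linarith) (by nlinarith [hy.2]))
  refine this.trans (le_of_eq ?_)
  rw [abs_of_nonneg (by linarith)]
  field_simp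
  ring

theorem pv_dispersion_power_law (s a b : ℝ) (hs : 0 < s) (hb0 : 0 < b) (hb1 : b < 1) :
    Filter.Tendsto (fun ε : ℝ =>
      (2 * s / Real.pi) *
        ((∫ x in Set.Ioo (0:ℝ) (s - ε), a * x ^ (-b) / (x ^ 2 - s ^ 2)) +
         (∫ x in Set.Ioi (s + ε), a * x ^ (-b) / (x ^ 2 - s ^ 2))))
      (nhdsWithin 0 (Set.Ioi 0))
      (nhds (-a * Real.tan (Real.pi * b / 2) * s ^ (-b))) := by
  have hev : ∀ᶠ ε in nhdsWithin (0:ℝ) (Set.Ioi 0), 0 < ε / s ∧ ε / s < 1 ∧ 0 < ε := by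
    filter_upwards [Ioo_mem_nhdsGT hs] with ε hε
    exact ⟨div_pos hε.1 hs, (div_lt_one hs).2 hε.2, hε.1⟩
  have hdiv : Filter.Tendsto (fun ε : ℝ => ε / s) (nhdsWithin 0 (Set.Ioi 0)) (nhds 0) := by
    have : Filter.Tendsto (fun ε : ℝ => ε / s) (nhds 0) (nhds (0 / s)) := (continuous_id.div_const s).tendsto 0
    rw [zero_div] at this
    exact this.mono_left nhdsWithin_le_nhds
  have t1 : Filter.Tendsto (fun ε : ℝ => ∫ y in (0:ℝ)..(1 - ε / s), gg b y) (nhdsWithin 0 (Set.Ioi 0))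
      (nhds (Real.pi / 2 * Real.tan (Real.pi * b / 2))) := by
    rw [← gg_integral b hb0 hb1]
    have hc := intervalIntegral.continuousOn_primitive_interval' (gg_int b hb0 hb1) Set.left_mem_uIcc
    have hc1 := (hc 1 Set.right_mem_uIcc).tendsto
    refine hc1.comp (f := fun ε : ℝ => 1 - ε / s) (tendsto_nhdsWithin_iff.2 ⟨?_, ?_⟩)
    · simpa using hdiv.const_sub 1
    · filter_upwards [hev] with ε hε
      rw [Set.uIcc_of_le zero_le_one]
      exact ⟨by linarith [hε.2.1], by linarith [hε.1]⟩
  have t2 : Filter.Tendsto (fun ε : ℝ => ∫ y in (1 - ε / s)..(1 / (1 + ε / s)), y ^ b / (1 - y ^ 2))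
      (nhdsWithin 0 (Set.Ioi 0)) (nhds 0) :=
    squeeze_zero_norm' (by
      filter_upwards [hev] with ε hε
      exact small b _ hb0 hε.1 hε.2.1) hdiv
  have t := (t1.neg.add t2).const_mul ((2 * s / Real.pi) * (a * s ^ (-b) / s))
  have hpi := Real.pi_pos
  have hval : (2 * s / Real.pi) * (a * s ^ (-b) / s) * (-(Real.pi / 2 * Real.tan (Real.pi * b / 2)) + 0) =
      -a * Real.tan (Real.pi * b / 2) * s ^ (-b) := by
    field_simp
    ring
  rw [hval] at t
  refine t.congr' ?_
  filter_upwards [hev] with ε hε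
  rw [sub1 s a b ε hs, sub2 s a b ε hs hε.2.2, ← comb b _ hb0 hb1 hε.1 hε.2.1]
  ring
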